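/- Let G be a subgroup of the general linear group GL_n(ℂ) acting on ℂⁿ by matrix-vector multiplication. If for every vector v ∈ ℂⁿ the orbit {g • v : g ∈ G} is a finite set, then the group G is finite. -/

import Mathlib

/-- If every orbit of a subgroup `G ⊆ GL_n(ℂ)` on `ℂⁿ` (acting by matrix-vector
multiplication) is finite, then `G` is finite. -/
theorem finite_of_forall_orbit_finite (n : ℕ) (G : Subgroup (GL (Fin n) ℂ))
    (h : ∀ v : Fin n → ℂ,
      {w : Fin n → ℂ | ∃ g ∈ G, (g : Matrix (Fin n) (Fin n) ℂ).mulVec v = w}.Finite) :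
    (G : Set (GL (Fin n) ℂ)).Finite := by
  have hp := Set.Finite.pi' (fun i : Fin n => h (Pi.single i 1))
  refine Set.Finite.of_injOn
    (f := fun (g : GL (Fin n) ℂ) (i : Fin n) =>
      (g : Matrix (Fin n) (Fin n) ℂ).mulVec (Pi.single i 1)) ?_ ?_ hp
  · intro g hg i
    exact ⟨g, hg, rfl⟩
  · intro a _ b _ hab
    apply Units.ext
    ext i j
    have := congrFun (congrFun hab j) i
    simpa using this
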